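/- arXiv:2510.19740 — 2 statements merged into one kernel-verified Lean document; each statement's English description precedes it below -/
import Mathlib

section
/- For a fixed integer r ≥ 1 and complex s with Re(s) > 1, the double Dirichlet series D₁(s,r) = Σ_{m≥1} (μ(m)/(φ(m)·m^{r+1})) · Σ_{n≥1} c_m(n)/n^s equals (ζ(s)/ζ(s+r+1)) · Π_p (1 + (1/(p^{r+1}(p-1))) · (1 - p^{-s})/(1 - p^{-(s+r+1)})). -/
open scoped Classical
open ArithmeticFunction

noncomputable def eC (x : ℂ) : ℂ := Complex.exp (2 * Real.pi * Complex.I * x)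

/-- Ramanujan sum `c_m(n) = ∑_{b mod m, (b,m)=1} e(bn/m)`. -/
noncomputable def ramanujanSum (m n : ℕ) : ℂ :=
  ∑ b ∈ (Finset.range m).filter (fun b => Nat.Coprime b m), eC ((b : ℂ) * n / m)

/-- Gauss sum `τ(χ) = ∑_{b mod m} χ(b) e(b/m)`. -/
noncomputable def gaussSum' {m : ℕ} (χ : DirichletCharacter ℂ m) : ℂ :=
  ∑ b ∈ Finset.range m, χ b * eC ((b : ℂ) / m)

/-- `c'_g(n) = ∑_{b mod m, (b,m)=1} g(b) e(bn/m)` for a weight `g`. -/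
noncomputable def cCharF (m : ℕ) (g : ℕ → ℂ) (n : ℕ) : ℂ :=
  ∑ b ∈ (Finset.range m).filter (fun b => Nat.Coprime b m), g b * eC ((b : ℂ) * n / m)

lemma moeb_norm (n : ℕ) : ‖((moebius n : ℤ) : ℂ)‖ ≤ 1 := by
  rw [Complex.norm_intCast]
  exact_mod_cast abs_moebius_le_one

lemma rs_eq (d n : ℕ) (hd : d ≠ 0) :
    ramanujanSum d n = ∑ z ∈ primitiveRoots d ℂ, z ^ n := by
  unfold ramanujanSum
  have hd0 : (d : ℂ) ≠ 0 := by exact_mod_cast hd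
  have key : ∀ b : ℕ, Complex.exp (2 * Real.pi * Complex.I * ((b : ℂ) / d)) =
      Complex.exp (2 * Real.pi * Complex.I / d) ^ b := by
    intro b
    rw [← Complex.exp_nat_mul]; congr 1; ring
  refine Finset.sum_bij (fun b _ => Complex.exp (2 * Real.pi * Complex.I * ((b : ℂ) / d)))
    ?_ ?_ ?_ ?_
  · intro b hb
    simp only [Finset.mem_filter, Finset.mem_range] at hb
    rw [mem_primitiveRoots (Nat.pos_of_ne_zero hd)]
    exact Complex.isPrimitiveRoot_exp_of_coprime b d hd hb.2
  · intro a ha b hb hab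
    simp only [Finset.mem_filter, Finset.mem_range] at ha hb
    rw [key, key] at hab
    exact (Complex.isPrimitiveRoot_exp d hd).pow_inj ha.1 hb.1 hab
  · intro z hz
    rw [mem_primitiveRoots (Nat.pos_of_ne_zero hd), Complex.isPrimitiveRoot_iff _ _ hd] at hz
    obtain ⟨i, hi, hc, h⟩ := hz
    exact ⟨i, Finset.mem_filter.2 ⟨Finset.mem_range.2 hi, hc⟩, h⟩
  · intro b _
    unfold eC
    rw [← Complex.exp_nat_mul]; congr 1; ring

lemma sum_roots (m n : ℕ) (hm : m ≠ 0) :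
    ∑ z ∈ Polynomial.nthRootsFinset m (1 : ℂ), z ^ n = if m ∣ n then (m : ℂ) else 0 := by
  have hz := Complex.isPrimitiveRoot_exp m hm
  set z := Complex.exp (2 * Real.pi * Complex.I / m)
  have himg : Polynomial.nthRootsFinset m (1 : ℂ) = (Finset.range m).image (fun i => z ^ i) := by
    ext x
    rw [Polynomial.mem_nthRootsFinset (Nat.pos_of_ne_zero hm)]
    simp only [Finset.mem_image, Finset.mem_range]
    constructor
    · intro h
      have : NeZero m := ⟨hm⟩
      exact hz.eq_pow_of_pow_eq_one h
    · rintro ⟨i, _, rfl⟩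
      rw [← pow_mul, mul_comm, pow_mul, hz.pow_eq_one, one_pow]
  rw [himg, Finset.sum_image (fun a ha b hb h => hz.pow_inj (Finset.mem_range.1 ha) (Finset.mem_range.1 hb) h)]
  have : ∀ i ∈ Finset.range m, (z ^ i) ^ n = (z ^ n) ^ i := fun i _ => by
    rw [← pow_mul, mul_comm, pow_mul]
  rw [Finset.sum_congr rfl this]
  split_ifs with h
  · simp [(hz.pow_eq_one_iff_dvd n).2 h]
  · have h1 : z ^ n ≠ 1 := fun h' => h ((hz.pow_eq_one_iff_dvd n).1 h')
    rw [geom_sum_eq h1, ← pow_mul, mul_comm n m, pow_mul, hz.pow_eq_one]; simp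

lemma rs_div (m n : ℕ) (hm : m ≠ 0) :
    ∑ d ∈ m.divisors, ramanujanSum d n = if m ∣ n then (m : ℂ) else 0 := by
  rw [← sum_roots m n hm, IsPrimitiveRoot.nthRoots_one_eq_biUnion_primitiveRoots,
    Finset.sum_biUnion]
  · refine Finset.sum_congr rfl fun d hd => ?_
    exact rs_eq d n (Nat.pos_of_mem_divisors hd).ne'
  · intro a _ b _ hab
    exact IsPrimitiveRoot.disjoint hab

lemma rs_norm (d n : ℕ) : ‖ramanujanSum d n‖ ≤ d := by
  unfold ramanujanSum
  refine (norm_sum_le _ _).trans ?_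
  have : ∀ b ∈ (Finset.range d).filter (fun b => Nat.Coprime b d),
      ‖eC ((b : ℂ) * n / d)‖ ≤ 1 := by
    intro b _
    unfold eC
    have : 2 * Real.pi * Complex.I * ((b : ℂ) * n / d) =
      ((2 * Real.pi * ((b : ℝ) * n / d) : ℝ) : ℂ) * Complex.I := by push_cast; ring
    rw [this, Complex.norm_exp_ofReal_mul_I]
  refine (Finset.sum_le_sum this).trans ?_
  simp only [Finset.sum_const, nsmul_eq_mul, mul_one]
  exact_mod_cast (Finset.card_filter_le _ _).trans (by simp)

lemma zsum (s : ℂ) (hs : 1 < s.re) : Summable (fun n : ℕ => 1 / ((n + 1 : ℕ) : ℂ) ^ s) :=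
  (summable_nat_add_iff 1 (f := fun n : ℕ => 1 / (n : ℂ) ^ s)).2 (Complex.summable_one_div_nat_cpow.2 hs)

noncomputable def FF (s : ℂ) (m : ℕ) : ℂ :=
  ∑' n : ℕ, ramanujanSum m (n + 1) / ((n + 1 : ℕ) : ℂ) ^ s

lemma FF_summable (s : ℂ) (hs : 1 < s.re) (m : ℕ) :
    Summable (fun n : ℕ => ramanujanSum m (n + 1) / ((n + 1 : ℕ) : ℂ) ^ s) := by
  refine Summable.of_norm_bounded ((zsum s hs).norm.mul_left (m : ℝ)) fun n => ?_
  rw [div_eq_mul_one_div, norm_mul]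
  exact mul_le_mul_of_nonneg_right (rs_norm _ _) (norm_nonneg _)

lemma FF_div (s : ℂ) (hs : 1 < s.re) (m : ℕ) (hm : m > 0) :
    ∑ d ∈ m.divisors, FF s d = riemannZeta s * (m : ℂ) ^ (1 - s) := by
  unfold FF
  rw [← Summable.tsum_finsetSum (fun d _ => FF_summable s hs d)]
  simp_rw [← Finset.sum_div, rs_div m _ hm.ne']
  have hm0 : (m : ℂ) ≠ 0 := by exact_mod_cast hm.ne'
  have hinj : Function.Injective (fun k : ℕ => m * (k + 1) - 1) := by
    intro a b hab
    simp only at hab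
    have h1 : 0 < m * (a + 1) := by positivity
    have h2 : 0 < m * (b + 1) := by positivity
    have : m * (a + 1) = m * (b + 1) := by omega
    have := Nat.eq_of_mul_eq_mul_left hm this
    omega
  rw [← hinj.tsum_eq]
  · rw [zeta_eq_tsum_one_div_nat_add_one_cpow hs, ← tsum_mul_right]
    refine tsum_congr fun k => ?_
    have h1 : m * (k + 1) - 1 + 1 = m * (k + 1) := Nat.sub_add_cancel (by
      have : 0 < m * (k + 1) := by positivity
      omega)
    rw [h1, if_pos (dvd_mul_right _ _), Nat.cast_mul, Complex.natCast_mul_natCast_cpow,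
      Complex.cpow_sub _ _ hm0, Complex.cpow_one]
    push_cast
    rw [div_mul_div_comm, one_mul, mul_comm ((k + 1 : ℂ) ^ s)]
  · intro n hn
    simp only [Function.mem_support] at hn
    have hd : m ∣ n + 1 := by
      by_contra h
      simp [h] at hn
    obtain ⟨c, hc⟩ := hd
    refine ⟨c - 1, ?_⟩
    have : c ≠ 0 := by rintro rfl; simp at hc
    simp only [Nat.sub_add_cancel (Nat.one_le_iff_ne_zero.2 this)]
    omega

noncomputable def GG (s : ℂ) : ArithmeticFunction ℂ :=
  ⟨fun n => if n = 0 then 0 else (n : ℂ) ^ (1 - s), by simp⟩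

lemma GG_mult (s : ℂ) : (GG s).IsMultiplicative := by
  rw [IsMultiplicative.iff_ne_zero]
  refine ⟨by simp [GG], ?_⟩
  intro m n hm hn _
  simp [GG, hm, hn, Complex.natCast_mul_natCast_cpow]

noncomputable def HH (s : ℂ) : ArithmeticFunction ℂ :=
  ((moebius : ArithmeticFunction ℤ) : ArithmeticFunction ℂ) * GG s

lemma HH_mult (s : ℂ) : (HH s).IsMultiplicative :=
  (isMultiplicative_moebius.intCast).mul (GG_mult s)

lemma FF_eq (s : ℂ) (hs : 1 < s.re) (m : ℕ) (hm : m > 0) :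
    FF s m = riemannZeta s * HH s m := by
  rw [← (sum_eq_iff_sum_mul_moebius_eq (f := FF s) (g := fun m => riemannZeta s * (m : ℂ) ^ (1 - s))).1
    (FF_div s hs) m hm, HH, ArithmeticFunction.mul_apply, Finset.mul_sum]
  refine Finset.sum_congr rfl fun x hx => ?_
  have : x.2 ≠ 0 := by
    rintro h
    have := (Nat.mem_divisorsAntidiagonal.1 hx)
    rw [h] at this; simp at this; omega
  simp [GG, this]; ring

lemma HH_norm (s : ℂ) (hs : 1 < s.re) (m : ℕ) : ‖HH s m‖ ≤ m.divisors.card := by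
  rw [HH, ArithmeticFunction.mul_apply]
  refine (norm_sum_le _ _).trans ?_
  have hcard : m.divisorsAntidiagonal.card = m.divisors.card := by
    rw [← Nat.map_div_right_divisors, Finset.card_map]
  refine (Finset.sum_le_card_nsmul _ _ 1 ?_).trans (by simp [hcard])
  intro x hx
  rw [norm_mul]
  refine mul_le_one₀ (moeb_norm _) (norm_nonneg _) ?_
  have h0 : x.2 ≠ 0 := by
    rintro h
    have := (Nat.mem_divisorsAntidiagonal.1 hx)
    rw [h] at this; simp at this; omega
  simp only [GG, coe_mk, if_neg h0]
  rw [Complex.norm_natCast_cpow_of_pos (Nat.pos_of_ne_zero h0)]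
  exact Real.rpow_le_one_of_one_le_of_nonpos (by exact_mod_cast Nat.pos_of_ne_zero h0)
    (by simp; linarith)

lemma HH_prime (s : ℂ) (p : ℕ) (hp : p.Prime) : HH s p = (p : ℂ) ^ (1 - s) - 1 := by
  rw [HH, ArithmeticFunction.mul_apply, ← Nat.map_div_right_divisors, Finset.sum_map, hp.divisors,
    Finset.sum_pair hp.one_lt.ne]
  change ((moebius 1 : ℤ) : ℂ) * GG s (p / 1) + ((moebius p : ℤ) : ℂ) * GG s (p / p) = _
  simp [GG, hp.ne_zero, moebius_apply_prime hp, Nat.div_self hp.pos]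
  ring

noncomputable def KK (r : ℕ) : ArithmeticFunction ℂ :=
  ⟨fun n => 1 / ((Nat.totient n : ℂ) * (n : ℂ) ^ (r + 1)), by simp⟩

lemma KK_mult (r : ℕ) : (KK r).IsMultiplicative := by
  refine ⟨by simp [KK], ?_⟩
  intro m n h
  simp [KK, Nat.totient_mul h]; ring

noncomputable def PP (r : ℕ) (s : ℂ) : ArithmeticFunction ℂ :=
  pmul ((moebius : ArithmeticFunction ℤ) : ArithmeticFunction ℂ) (pmul (KK r) (HH s))

lemma PP_mult (r : ℕ) (s : ℂ) : (PP r s).IsMultiplicative :=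
  (isMultiplicative_moebius.intCast).pmul ((KK_mult r).pmul (HH_mult s))

lemma PP_summable (r : ℕ) (hr : 1 ≤ r) (s : ℂ) (hs : 1 < s.re) : Summable (fun n => ‖PP r s n‖) := by
  have h1 : LSeriesSummable (fun n => ((((zeta : ArithmeticFunction ℕ) : ArithmeticFunction ℂ) * ((zeta : ArithmeticFunction ℕ) : ArithmeticFunction ℂ)) n)) 2 := by
    have : LSeriesSummable (fun n => ((zeta : ArithmeticFunction ℕ) : ArithmeticFunction ℂ) n) 2 := by
      simpa using (LSeriesSummable_zeta_iff (s := 2)).2 (by norm_num)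
    exact ArithmeticFunction.LSeriesSummable_mul this this
  refine Summable.of_nonneg_of_le (fun _ => norm_nonneg _) (fun n => ?_) h1.norm
  rcases Nat.eq_zero_or_pos n with rfl | hn
  · simp
  rw [LSeries.term_of_ne_zero hn.ne', coe_mul_zeta_apply]
  have hc : ∑ i ∈ n.divisors, ((zeta : ArithmeticFunction ℕ) : ArithmeticFunction ℂ) i = n.divisors.card := by
    rw [Finset.sum_congr rfl (g := fun _ => (1 : ℂ))]
    · simp
    · intro x hx
      simp [(Nat.pos_of_mem_divisors hx).ne']
  rw [hc, PP, pmul_apply, pmul_apply, norm_mul, norm_mul, norm_div, Complex.norm_natCast]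
  have hK : ‖KK r n‖ ≤ 1 / (n : ℝ) ^ 2 := by
    simp only [KK, coe_mk, norm_div, norm_one, norm_mul, norm_pow, Complex.norm_natCast]
    have h1 : (1 : ℝ) ≤ n := by exact_mod_cast hn
    have h2 : (1 : ℝ) ≤ n.totient := by exact_mod_cast Nat.totient_pos.2 hn
    gcongr
    calc (n : ℝ) ^ 2 ≤ (n : ℝ) ^ (r + 1) := pow_le_pow_right₀ h1 (by omega)
      _ ≤ _ := le_mul_of_one_le_left (by positivity) h2
  have h2 : ‖(n : ℂ) ^ (2 : ℂ)‖ = (n : ℝ) ^ 2 := by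
    rw [Complex.cpow_ofNat]; simp
  rw [h2]
  calc _ ≤ 1 * (1 / (n : ℝ) ^ 2 * n.divisors.card) := by
        gcongr
        · exact moeb_norm n
        · exact HH_norm s hs n
    _ = _ := by ring

lemma PP_tsum (r : ℕ) (s : ℂ) (p : ℕ) (hp : p.Prime) :
    ∑' e, PP r s (p ^ e) = 1 + (1 - (p : ℂ) ^ (1 - s)) / (((p : ℂ) - 1) * (p : ℂ) ^ (r + 1)) := by
  rw [tsum_eq_sum (s := Finset.range 2)]
  · simp only [Finset.sum_range_succ, Finset.sum_range_zero, zero_add, pow_zero, pow_one,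
      (PP_mult r s).map_one]
    rw [PP, pmul_apply, pmul_apply, HH_prime s p hp]
    simp [KK, moebius_apply_prime hp, Nat.totient_prime hp,
      Nat.cast_sub hp.one_le]
    rw [div_eq_mul_inv, mul_inv]
    ring
  · intro e he
    simp only [Finset.mem_range, not_lt] at he
    rw [PP, pmul_apply]
    simp [moebius_apply_prime_pow hp (show e ≠ 0 by omega), show e ≠ 1 by omega]

theorem stmt3 (r : ℕ) (hr : 1 ≤ r) (s : ℂ) (hs : 1 < s.re) :
    (∑' m : ℕ, ((moebius (m + 1) : ℤ) / ((Nat.totient (m + 1) : ℂ) * ((m + 1 : ℕ) : ℂ) ^ (r + 1))) *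
        ∑' n : ℕ, ramanujanSum (m + 1) (n + 1) / ((n + 1 : ℕ) : ℂ) ^ s) =
      riemannZeta s / riemannZeta (s + (r : ℂ) + 1) *
        ∏' p : Nat.Primes,
          (1 + (1 / ((p : ℂ) ^ (r + 1) * ((p : ℂ) - 1))) *
            ((1 - (p : ℂ) ^ (-s)) / (1 - (p : ℂ) ^ (-(s + (r : ℂ) + 1))))) := by
  have hs' : 1 < (s + (r : ℂ) + 1).re := by
    simp only [Complex.add_re, Complex.natCast_re, Complex.one_re]
    have : (0 : ℝ) ≤ r := Nat.cast_nonneg r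
    linarith
  have hL : (∑' m : ℕ, ((moebius (m + 1) : ℤ) / ((Nat.totient (m + 1) : ℂ) * ((m + 1 : ℕ) : ℂ) ^ (r + 1))) *
        ∑' n : ℕ, ramanujanSum (m + 1) (n + 1) / ((n + 1 : ℕ) : ℂ) ^ s) =
      riemannZeta s * ∑' m, PP r s m := by
    rw [(PP_summable r hr s hs).of_norm.tsum_eq_zero_add, ArithmeticFunction.map_zero, zero_add,
      ← tsum_mul_left]
    refine tsum_congr fun m => ?_
    have := FF_eq s hs (m + 1) (Nat.succ_pos m)
    unfold FF at this
    rw [this, PP, pmul_apply, pmul_apply]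
    simp only [KK, coe_mk, intCoe_apply]
    ring
  have hE := (PP_mult r s).eulerProduct_hasProd (PP_summable r hr s hs)
  have hZ := riemannZeta_eulerProduct_hasProd hs'
  have hz0 : riemannZeta (s + (r : ℂ) + 1) ≠ 0 := riemannZeta_ne_zero_of_one_lt_re hs'
  have hM := (hE.mul hZ).tprod_eq
  have hR : ∏' p : Nat.Primes,
          (1 + (1 / ((p : ℂ) ^ (r + 1) * ((p : ℂ) - 1))) *
            ((1 - (p : ℂ) ^ (-s)) / (1 - (p : ℂ) ^ (-(s + (r : ℂ) + 1))))) =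
      (∑' m, PP r s m) * riemannZeta (s + (r : ℂ) + 1) := by
    rw [← hM]
    refine tprod_congr fun p => ?_
    rw [PP_tsum r s p p.2]
    have hp0 : (p : ℂ) ≠ 0 := by exact_mod_cast p.2.ne_zero
    have hp1 : (p : ℂ) - 1 ≠ 0 := sub_ne_zero.2 (by exact_mod_cast p.2.ne_one)
    have hne : 1 - (p : ℂ) ^ (-(s + (r : ℂ) + 1)) ≠ 0 := by
      intro h
      have h1 : ‖(p : ℂ) ^ (-(s + (r : ℂ) + 1))‖ = 1 := by rw [← sub_eq_zero.1 h]; simp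
      rw [Complex.norm_natCast_cpow_of_pos p.2.pos] at h1
      have := Real.rpow_lt_one_of_one_lt_of_neg (x := (p : ℝ)) (z := (-(s + (r : ℂ) + 1)).re)
        (by exact_mod_cast p.2.one_lt) (by rw [Complex.neg_re]; linarith)
      linarith
    have e1 : (p : ℂ) ^ (1 - s) = p * (p : ℂ) ^ (-s) := by
      rw [sub_eq_add_neg, Complex.cpow_add _ _ hp0, Complex.cpow_one]
    have e2 : (p : ℂ) ^ (-(s + (r : ℂ) + 1)) = (p : ℂ) ^ (-s) / (p : ℂ) ^ (r + 1) := by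
      rw [show -(s + (r : ℂ) + 1) = -s - ((r + 1 : ℕ) : ℂ) by push_cast; ring,
        Complex.cpow_sub _ _ hp0, Complex.cpow_natCast]
    rw [e1]
    rw [e2] at hne ⊢
    have hpr : (p : ℂ) ^ (r + 1) ≠ 0 := pow_ne_zero _ hp0
    generalize (p : ℂ) ^ (r + 1) = q at *
    generalize (p : ℂ) ^ (-s) = x at *
    have hq : q - x ≠ 0 := by
      intro h
      apply hne
      rw [← sub_eq_zero.1 h, div_self hpr, sub_self]
    rw [show 1 - x / q = (q - x) / q by field_simp]
    field_simp
    ring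
  rw [hL, hR]
  field_simp
end

section
/- For fixed integer r ≥ 1, the Dirichlet series with shifted coefficient A_{σ_r}(s) = Σ_{n≥1} σ_r(n+1)/n^s converges for Re(s) > r + 1 and equals ζ(r+1)·Σ_{i=0}^{r} C(r,i)·(D₁(s-i, r) + D₂(s-i, r)), where D₁(s,r) = Σ_{m≥1} (μ(m)/(φ(m)m^{r+1}))·Σ_{n≥1} c_m(n)/n^s and D₂(s,r) = Σ_{m≥1} (1/(φ(m)m^{r+1}))·Σ_{χ mod m, χ≠χ₀} τ(χ)·Σ_{n≥1} c'_{χ̄}(n)/n^s. -/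
open scoped Classical
open ArithmeticFunction

/-- `D₁(s,r) = Σ_{m≥1} (μ(m)/(φ(m) m^{r+1})) Σ_{n≥1} c_m(n)/n^s`. -/
noncomputable def D1 (r : ℕ) (s : ℂ) : ℂ :=
  ∑' m : ℕ, ((moebius (m + 1) : ℤ) / ((Nat.totient (m + 1) : ℂ) * ((m + 1 : ℕ) : ℂ) ^ (r + 1))) *
    ∑' n : ℕ, ramanujanSum (m + 1) (n + 1) / ((n + 1 : ℕ) : ℂ) ^ s

/-- `D₂(s,r) = Σ_{m≥1} (1/(φ(m) m^{r+1})) Σ_{χ≠χ₀ mod m} τ(χ) Σ_{n≥1} c'_{χ̄}(n)/n^s`. -/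
noncomputable def D2 (r : ℕ) (s : ℂ) : ℂ :=
  ∑' m : ℕ, (1 / ((Nat.totient (m + 1) : ℂ) * ((m + 1 : ℕ) : ℂ) ^ (r + 1))) *
    ∑ χ ∈ Finset.univ.filter (fun χ : DirichletCharacter ℂ (m + 1) => χ ≠ 1),
      gaussSum' χ *
        ∑' n : ℕ, cCharF (m + 1) (fun b => starRingEnd ℂ (χ b)) (n + 1) / ((n + 1 : ℕ) : ℂ) ^ s


lemma eC_nat_mul (k b n : ℕ) : eC ((b : ℂ) * n / k) = (eC ((n : ℂ) / k)) ^ b := by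
  unfold eC
  rw [← Complex.exp_nat_mul]
  congr 1
  ring

lemma norm_eC (b n k : ℕ) : ‖eC ((b : ℂ) * n / k)‖ = 1 := by
  unfold eC
  have : (2 * Real.pi * Complex.I * ((b : ℂ) * n / k)) =
      ((2 * Real.pi * (b * n / k) : ℝ) : ℂ) * Complex.I := by
    push_cast; ring
  rw [this, Complex.norm_exp_ofReal_mul_I]

lemma eC_sum (k n : ℕ) (hk : 0 < k) :
    ∑ b ∈ Finset.range k, eC ((b : ℂ) * n / k) = if k ∣ n then (k : ℂ) else 0 := by
  have hk' : (k : ℂ) ≠ 0 := by exact_mod_cast hk.ne'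
  simp_rw [eC_nat_mul]
  split_ifs with h
  · obtain ⟨c, rfl⟩ := h
    have : eC (((k * c : ℕ) : ℂ) / k) = 1 := by
      unfold eC
      rw [Complex.exp_eq_one_iff]
      refine ⟨c, ?_⟩
      push_cast
      field_simp
    rw [this]; simp
  · have h1 : eC ((n : ℂ) / k) ≠ 1 := by
      unfold eC
      rw [Ne, Complex.exp_eq_one_iff]
      rintro ⟨c, hc⟩
      apply h
      have : (n : ℂ) = k * c := by
        have h2 : (2 * Real.pi * Complex.I : ℂ) ≠ 0 := Complex.two_pi_I_ne_zero
        rw [mul_comm (c : ℂ)] at hc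
        have := mul_left_cancel₀ h2 hc
        field_simp at this
        exact this
      have h3 : (n : ℤ) = k * c := by exact_mod_cast this
      exact Int.natCast_dvd_natCast.mp ⟨c, h3⟩
    have h2 : eC ((n : ℂ) / k) ^ k = 1 := by
      unfold eC
      rw [← Complex.exp_nat_mul, Complex.exp_eq_one_iff]
      refine ⟨n, ?_⟩
      push_cast
      field_simp
    rw [geom_sum_eq h1, h2]; simp

lemma sum_moeb (m b : ℕ) (hm : 0 < m) :
    ∑ d ∈ m.divisors, (if d ∣ b then ((moebius d : ℤ) : ℂ) else 0) =
      if Nat.Coprime b m then 1 else 0 := by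
  rw [← Finset.sum_filter]
  have h1 : m.divisors.filter (fun d => d ∣ b) = (Nat.gcd b m).divisors := by
    ext d
    simp only [Finset.mem_filter, Nat.mem_divisors, Nat.dvd_gcd_iff]
    have : Nat.gcd b m ≠ 0 := (Nat.gcd_pos_of_pos_right _ hm).ne'
    have := hm.ne'
    tauto
  rw [h1]
  have := congrArg (fun f : ArithmeticFunction ℂ => f (Nat.gcd b m))
    (coe_moebius_mul_coe_zeta (R := ℂ))
  simp only [coe_mul_zeta_apply, one_apply, intCoe_apply] at this
  exact this

lemma sum_dvd_range (d k : ℕ) (hd : 0 < d) (F : ℕ → ℂ) :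
    ∑ b ∈ (Finset.range (d * k)).filter (fun b => d ∣ b), F b =
      ∑ j ∈ Finset.range k, F (d * j) := by
  symm
  refine Finset.sum_nbij' (fun j => d * j) (fun b => b / d) ?_ ?_ ?_ ?_ ?_
  · intro j hj
    simp only [Finset.mem_range, Finset.mem_filter] at *
    exact ⟨Nat.mul_lt_mul_of_pos_left hj hd, dvd_mul_right _ _⟩
  · intro b hb
    simp only [Finset.mem_range, Finset.mem_filter] at *
    exact Nat.div_lt_of_lt_mul hb.1
  · intro j _
    simp [Nat.mul_div_cancel_left _ hd]
  · intro b hb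
    simp only [Finset.mem_range, Finset.mem_filter] at *
    exact Nat.mul_div_cancel' hb.2
  · intros; rfl

lemma ram_formula (m n : ℕ) (hm : 0 < m) :
    ramanujanSum m n = ∑ p ∈ m.divisorsAntidiagonal,
      (if p.1 ∣ n then (p.1 : ℂ) else 0) * ((moebius p.2 : ℤ) : ℂ) := by
  rw [Nat.sum_divisorsAntidiagonal'
    (f := fun a b => (if a ∣ n then (a : ℂ) else 0) * ((moebius b : ℤ) : ℂ))]
  unfold ramanujanSum
  rw [Finset.sum_filter]
  have : ∀ b ∈ Finset.range m, (if Nat.Coprime b m then eC ((b : ℂ) * n / m) else 0) =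
      ∑ d ∈ m.divisors, (if d ∣ b then ((moebius d : ℤ) : ℂ) * eC ((b : ℂ) * n / m) else 0) := by
    intro b _
    have h := sum_moeb m b hm
    have h2 := congrArg (fun x => x * eC ((b : ℂ) * n / m)) h
    simp only [Finset.sum_mul, ite_mul, one_mul, zero_mul] at h2
    exact h2.symm
  rw [Finset.sum_congr rfl this, Finset.sum_comm]
  refine Finset.sum_congr rfl fun d hd => ?_
  obtain ⟨k, rfl⟩ := Nat.dvd_of_mem_divisors hd
  have hd0 : 0 < d := Nat.pos_of_mul_pos_right hm
  have hk0 : 0 < k := Nat.pos_of_mul_pos_left hm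
  rw [← Finset.sum_filter, sum_dvd_range d k hd0, Nat.mul_div_cancel_left _ hd0,
    ← eC_sum k n hk0, Finset.sum_mul]
  refine Finset.sum_congr rfl fun j _ => ?_
  rw [mul_comm]
  congr 2
  have : (d : ℂ) ≠ 0 := by exact_mod_cast hd0.ne'
  have : (k : ℂ) ≠ 0 := by exact_mod_cast hk0.ne'
  push_cast
  field_simp

lemma ram_norm_le_totient (m n : ℕ) : ‖ramanujanSum m n‖ ≤ Nat.totient m := by
  unfold ramanujanSum
  refine (norm_sum_le _ _).trans ?_
  simp only [norm_eC]
  rw [Finset.sum_const, nsmul_eq_mul, mul_one, Nat.totient]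
  norm_cast
  refine Finset.card_le_card fun b hb => ?_
  simp only [Finset.mem_filter] at *
  exact ⟨hb.1, hb.2.symm⟩

lemma ram_norm_le (m n : ℕ) (hm : 0 < m) :
    ‖ramanujanSum m n‖ ≤ (Nat.gcd m n : ℝ) ^ 2 := by
  rw [ram_formula m n hm, Nat.sum_divisorsAntidiagonal
    (f := fun a b => (if a ∣ n then (a : ℂ) else 0) * ((moebius b : ℤ) : ℂ))]
  have hg : 0 < Nat.gcd m n := Nat.gcd_pos_of_pos_left _ hm
  have h0 : ∑ d ∈ m.divisors, (if d ∣ n then (d : ℂ) else 0) * ((moebius (m / d) : ℤ) : ℂ) =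
      ∑ d ∈ (Nat.gcd m n).divisors, (d : ℂ) * ((moebius (m / d) : ℤ) : ℂ) := by
    have h1 : (Nat.gcd m n).divisors = m.divisors.filter (fun d => d ∣ n) := by
      ext d
      simp only [Finset.mem_filter, Nat.mem_divisors, Nat.dvd_gcd_iff]
      have := hg.ne'
      have := hm.ne'
      tauto
    rw [h1, Finset.sum_filter]
    simp only [ite_mul, zero_mul]
  rw [h0]
  refine (norm_sum_le _ _).trans ?_
  have h2 : ∀ d ∈ (Nat.gcd m n).divisors, ‖(d : ℂ) * ((moebius (m / d) : ℤ) : ℂ)‖ ≤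
      (Nat.gcd m n : ℝ) := by
    intro d hd
    rw [norm_mul, Complex.norm_natCast, Complex.norm_intCast]
    have h3 : |((moebius (m / d) : ℤ) : ℝ)| ≤ 1 := by exact_mod_cast abs_moebius_le_one
    have h4 : (d : ℝ) ≤ Nat.gcd m n := by exact_mod_cast Nat.divisor_le hd
    calc (d : ℝ) * |((moebius (m / d) : ℤ) : ℝ)| ≤ d * 1 := by gcongr
      _ ≤ _ := by simpa using h4
  refine (Finset.sum_le_card_nsmul _ _ _ h2).trans ?_
  rw [nsmul_eq_mul, sq]
  gcongr
  exact Nat.card_divisors_le_self _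

lemma ram_one (m : ℕ) (hm : 0 < m) : ramanujanSum m 1 = ((moebius m : ℤ) : ℂ) := by
  rw [ram_formula m 1 hm, Nat.sum_divisorsAntidiagonal
    (f := fun a b => (if a ∣ 1 then (a : ℂ) else 0) * ((moebius b : ℤ) : ℂ)),
    Finset.sum_eq_single 1]
  · simp
  · intro b _ hb
    rw [if_neg (by simpa using hb), zero_mul]
  · intro h
    simp at h; omega

lemma char_expand (m n : ℕ) (hm : 0 < m) :
    ramanujanSum m (n + 1) = 1 / (Nat.totient m : ℂ) *
      ∑ χ : DirichletCharacter ℂ m, gaussSum' χ *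
        cCharF m (fun b => starRingEnd ℂ (χ b)) n := by
  have : NeZero m := ⟨hm.ne'⟩
  have hφ : (Nat.totient m : ℂ) ≠ 0 := by
    exact_mod_cast (Nat.totient_pos.mpr hm).ne'
  unfold gaussSum' cCharF ramanujanSum
  simp_rw [Finset.sum_mul_sum]
  rw [Finset.sum_comm' (t' := Finset.range m) (s' := fun _ => Finset.univ) (by simp)]
  rw [eq_comm, one_div, inv_mul_eq_iff_eq_mul₀ hφ]
  have h1 : ∀ y ∈ Finset.range m, (∑ χ : DirichletCharacter ℂ m,
      ∑ b ∈ (Finset.range m).filter (fun b => Nat.Coprime b m),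
        χ y * eC ((y : ℂ) / m) * (starRingEnd ℂ (χ b) * eC ((b : ℂ) * n / m))) =
      ∑ b ∈ (Finset.range m).filter (fun b => Nat.Coprime b m),
        if b = y then (Nat.totient m : ℂ) * (eC ((b : ℂ) * (n + 1 : ℕ) / m)) else 0 := by
    intro y hy
    rw [Finset.sum_comm]
    refine Finset.sum_congr rfl fun b hb => ?_
    simp only [Finset.mem_filter, Finset.mem_range] at hb hy
    have hu : IsUnit (b : ZMod m) := (ZMod.isUnit_iff_coprime b m).mpr hb.2
    have h2 := DirichletCharacter.sum_char_inv_mul_char_eq ℂ hu (y : ZMod m)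
    have h3 : ∀ χ : DirichletCharacter ℂ m, starRingEnd ℂ (χ b) = χ (b : ZMod m)⁻¹ := by
      intro χ
      have hA : χ⁻¹ (b : ZMod m) = χ (b : ZMod m)⁻¹ := by
        rw [MulChar.inv_apply]
        congr 1
        obtain ⟨u, hu⟩ := hu
        rw [← hu, Ring.inverse_unit, ZMod.inv_coe_unit]
      rw [← hA, ← MulChar.star_eq_inv, MulChar.star_apply]
      rfl
    have h4 : ((b : ZMod m) = (y : ZMod m)) ↔ b = y := by
      rw [ZMod.natCast_eq_natCast_iff']
      rw [Nat.mod_eq_of_lt hb.1, Nat.mod_eq_of_lt hy]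
    simp only [h4] at h2
    have h5 : ∀ χ : DirichletCharacter ℂ m,
        χ y * eC ((y : ℂ) / m) * (starRingEnd ℂ (χ b) * eC ((b : ℂ) * n / m)) =
        (χ (b : ZMod m)⁻¹ * χ y) * (eC ((y : ℂ) / m) * eC ((b : ℂ) * n / m)) := by
      intro χ; rw [h3]; ring
    simp only [h5]
    rw [← Finset.sum_mul, h2]
    split_ifs with h
    · subst h
      congr 1
      unfold eC
      rw [← Complex.exp_add]
      congr 1
      push_cast; ring
    · simp
  rw [Finset.sum_congr rfl h1, Finset.sum_comm, Finset.mul_sum]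
  refine Finset.sum_congr rfl fun b hb => ?_
  rw [Finset.sum_ite_eq]
  rw [if_pos (Finset.mem_filter.mp hb).1]

lemma gauss_one (m : ℕ) (hm : 0 < m) :
    gaussSum' (1 : DirichletCharacter ℂ m) = ((moebius m : ℤ) : ℂ) := by
  rw [← ram_one m hm]
  unfold gaussSum' ramanujanSum
  rw [Finset.sum_filter]
  refine Finset.sum_congr rfl fun b _ => ?_
  split_ifs with h
  · rw [MulChar.one_apply ((ZMod.isUnit_iff_coprime b m).mpr h)]; simp
  · rw [MulChar.map_nonunit _ (fun h' => h ((ZMod.isUnit_iff_coprime b m).mp h'))]; simp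

lemma cChar_one (m n : ℕ) :
    cCharF m (fun b => starRingEnd ℂ ((1 : DirichletCharacter ℂ m) b)) n = ramanujanSum m n := by
  unfold cCharF ramanujanSum
  refine Finset.sum_congr rfl fun b hb => ?_
  beta_reduce
  rw [MulChar.one_apply ((ZMod.isUnit_iff_coprime b m).mpr (Finset.mem_filter.mp hb).2)]; simp

lemma cChar_norm_le (m n : ℕ) (χ : DirichletCharacter ℂ m) :
    ‖cCharF m (fun b => starRingEnd ℂ (χ b)) n‖ ≤ m := by
  unfold cCharF
  refine (norm_sum_le _ _).trans ?_
  have : ∀ b ∈ (Finset.range m).filter (fun b => Nat.Coprime b m),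
      ‖starRingEnd ℂ (χ b) * eC ((b : ℂ) * n / m)‖ ≤ 1 := by
    intro b _
    rw [norm_mul, norm_eC, mul_one, RCLike.norm_conj]
    exact DirichletCharacter.norm_le_one χ _
  refine (Finset.sum_le_card_nsmul _ _ _ this).trans ?_
  rw [nsmul_eq_mul, mul_one]
  norm_cast
  exact (Finset.card_filter_le _ _).trans (by simp)

/-- split off the trivial character -/
lemma char_expand' (m n : ℕ) (hm : 0 < m) :
    ramanujanSum m (n + 1) = 1 / (Nat.totient m : ℂ) *
      (((moebius m : ℤ) : ℂ) * ramanujanSum m n +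
      ∑ χ ∈ Finset.univ.filter (fun χ : DirichletCharacter ℂ m => χ ≠ 1), gaussSum' χ *
        cCharF m (fun b => starRingEnd ℂ (χ b)) n) := by
  rw [char_expand m n hm, Finset.filter_ne', ← Finset.add_sum_erase _ _ (Finset.mem_univ 1),
    gauss_one m hm, cChar_one]

lemma ram_series (r n : ℕ) (hr : 1 ≤ r) (hn : 0 < n) :
    riemannZeta ((r : ℂ) + 1) *
      (∑' m : ℕ, ramanujanSum (m + 1) n / ((m + 1 : ℕ) : ℂ) ^ (r + 1)) * (n : ℂ) ^ r
      = (sigma r n : ℂ) := by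
  set s : ℂ := (r : ℂ) + 1 with hs
  have hs1 : 1 < s.re := by
    simp [hs]; omega
  set a : ℕ → ℂ := fun d => if d ∣ n then (d : ℂ) else 0 with ha
  have hcp : ∀ k : ℕ, (k : ℂ) ^ s = (k : ℂ) ^ (r + 1) := by
    intro k
    rw [hs, ← Complex.cpow_natCast]; push_cast; rfl
  have hA : LSeriesHasSum a s (∑ d ∈ n.divisors, LSeries.term a s d) := by
    refine hasSum_sum_of_ne_finset_zero fun d hd => ?_
    have : ¬ d ∣ n := fun h => hd (Nat.mem_divisors.mpr ⟨h, hn.ne'⟩)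
    simp [LSeries.term_def, ha, this]
  have hM := (LSeriesSummable_moebius_iff.mpr hs1).LSeriesHasSum
  have hC := hA.convolution hM
  have hz := LSeries_zeta_mul_Lseries_moebius hs1
  rw [LSeries_zeta_eq_riemannZeta hs1] at hz
  have hC' := (hasSum_nat_add_iff' 1).mpr hC
  have ht : ∀ m : ℕ, LSeries.term (LSeries.convolution a (fun k => ((moebius k : ℤ) : ℂ))) s (m + 1)
      = ramanujanSum (m + 1) n / ((m + 1 : ℕ) : ℂ) ^ (r + 1) := by
    intro m
    rw [LSeries.term_of_ne_zero (Nat.succ_ne_zero m), hcp, LSeries.convolution_def,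
      ram_formula (m + 1) n (Nat.succ_pos m)]
  simp only [ht, Finset.range_one, Finset.sum_singleton, LSeries.term_zero, sub_zero] at hC'
  rw [hC'.tsum_eq]
  have : riemannZeta s * ((∑ d ∈ n.divisors, LSeries.term a s d) *
      LSeries (fun k => ((moebius k : ℤ) : ℂ)) s) * (n : ℂ) ^ r =
      (∑ d ∈ n.divisors, LSeries.term a s d) * (n : ℂ) ^ r := by
    linear_combination (∑ d ∈ n.divisors, LSeries.term a s d) * (n : ℂ) ^ r * hz
  rw [this, sigma_apply, ← Nat.sum_div_divisors n (fun d => d ^ r), Finset.sum_mul]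
  push_cast
  refine Finset.sum_congr rfl fun d hd => ?_
  have hdn := Nat.dvd_of_mem_divisors hd
  have hd0 : d ≠ 0 := (Nat.pos_of_mem_divisors hd).ne'
  have hd1 : (d : ℂ) ≠ 0 := by exact_mod_cast hd0
  rw [LSeries.term_of_ne_zero hd0, hcp, Nat.cast_div hdn hd1]
  simp only [ha, if_pos hdn]
  rw [div_pow, pow_succ]
  field_simp

lemma double_summable (r : ℕ) (hr : 1 ≤ r) (s : ℂ) (hs : 1 < s.re) :
    Summable (fun p : ℕ × ℕ => ramanujanSum (p.1 + 1) (p.2 + 2) / ((p.1 + 1 : ℕ) : ℂ) ^ (r + 1) /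
      ((p.2 + 1 : ℕ) : ℂ) ^ s) := by
  have h1 : Summable (fun g : ℕ => 1 / (g : ℝ) ^ s.re) := Real.summable_one_div_nat_rpow.mpr hs
  have h2 : Summable (fun k : ℕ => 1 / (k : ℝ) ^ 2) :=
    Real.summable_one_div_nat_pow.mpr (by norm_num)
  have h3 := h2.mul_of_nonneg h1 (fun k => by positivity) (fun k => by positivity)
  have h4 := h1.mul_of_nonneg h3 (fun k => by positivity) (fun k => by positivity)
  let i : ℕ × ℕ → ℕ × ℕ × ℕ := fun p =>
    (Nat.gcd (p.1 + 1) (p.2 + 2), (p.1 + 1) / Nat.gcd (p.1 + 1) (p.2 + 2),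
      (p.2 + 2) / Nat.gcd (p.1 + 1) (p.2 + 2))
  have hi : Function.Injective i := by
    rintro ⟨m, n⟩ ⟨m', n'⟩ h
    simp only [i, Prod.mk.injEq] at h
    obtain ⟨e1, e2, e3⟩ := h
    have a1 := Nat.div_mul_cancel (Nat.gcd_dvd_left (m + 1) (n + 2))
    have a2 := Nat.div_mul_cancel (Nat.gcd_dvd_right (m + 1) (n + 2))
    have a3 := Nat.div_mul_cancel (Nat.gcd_dvd_left (m' + 1) (n' + 2))
    have a4 := Nat.div_mul_cancel (Nat.gcd_dvd_right (m' + 1) (n' + 2))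
    rw [e2, e1, a3] at a1
    rw [e3, e1, a4] at a2
    simp only [Prod.mk.injEq]
    omega
  have h5 := (h4.comp_injective hi).mul_left ((2 : ℝ) ^ s.re)
  refine Summable.of_norm_bounded h5 ?_
  rintro ⟨m, n⟩
  simp only [Function.comp, i]
  have hb := ram_norm_le (m + 1) (n + 2) (Nat.succ_pos m)
  have hg : 0 < Nat.gcd (m + 1) (n + 2) := Nat.gcd_pos_of_pos_left _ (Nat.succ_pos m)
  obtain ⟨k, hk⟩ := Nat.gcd_dvd_left (m + 1) (n + 2)
  obtain ⟨l, hl⟩ := Nat.gcd_dvd_right (m + 1) (n + 2)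
  generalize Nat.gcd (m + 1) (n + 2) = g at *
  have hk' : (m + 1) / g = k := by rw [hk, Nat.mul_div_cancel_left _ hg]
  have hl' : (n + 2) / g = l := by rw [hl, Nat.mul_div_cancel_left _ hg]
  rw [hk', hl']
  have hk0 : 0 < k := by
    rcases Nat.eq_zero_or_pos k with h | h
    · subst h; simp at hk
    · exact h
  have hl0 : 0 < l := by
    rcases Nat.eq_zero_or_pos l with h | h
    · subst h; simp at hl
    · exact h
  rw [norm_div, norm_div, norm_pow, Complex.norm_natCast_cpow_of_pos (Nat.succ_pos n),
    Complex.norm_natCast]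
  have hgR : (0 : ℝ) < g := by exact_mod_cast hg
  have hkR : (0 : ℝ) < k := by exact_mod_cast hk0
  have hlR : (0 : ℝ) < l := by exact_mod_cast hl0
  have e1 : ((m + 1 : ℕ) : ℝ) ^ 2 ≤ ((m + 1 : ℕ) : ℝ) ^ (r + 1) :=
    pow_le_pow_right₀ (by exact_mod_cast Nat.succ_pos m) (by omega)
  have e2 : (((g * l : ℕ) : ℝ) / 2) ^ s.re ≤ ((n + 1 : ℕ) : ℝ) ^ s.re := by
    apply Real.rpow_le_rpow (by positivity) _ (by linarith)
    rw [← hl]; push_cast; linarith [(Nat.cast_nonneg n : (0:ℝ) ≤ n)]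
  calc ‖ramanujanSum (m + 1) (n + 2)‖ / ((m + 1 : ℕ) : ℝ) ^ (r + 1) / ((n + 1 : ℕ) : ℝ) ^ s.re
      ≤ (g : ℝ) ^ 2 / ((m + 1 : ℕ) : ℝ) ^ 2 / (((g * l : ℕ) : ℝ) / 2) ^ s.re := by
        gcongr
    _ = _ := by
        rw [hk]
        push_cast
        rw [Real.div_rpow (by positivity) (by norm_num), Real.mul_rpow hgR.le hlR.le]
        have := Real.rpow_pos_of_pos hgR s.re
        have := Real.rpow_pos_of_pos hlR s.re
        field_simp

lemma shift_summable (s : ℂ) (hs : 1 < s.re) :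
    Summable (fun n : ℕ => 1 / ((n + 1 : ℕ) : ℝ) ^ s.re) :=
  (summable_nat_add_iff (f := fun n : ℕ => 1 / (n : ℝ) ^ s.re) 1).mpr
    (Real.summable_one_div_nat_rpow.mpr hs)

lemma bdd_term (s : ℂ) (b : ℕ → ℂ) (C : ℝ) (hb : ∀ n, ‖b n‖ ≤ C) (n : ℕ) :
    ‖b n / ((n + 1 : ℕ) : ℂ) ^ s‖ ≤ C * (1 / ((n + 1 : ℕ) : ℝ) ^ s.re) := by
  rw [norm_div, Complex.norm_natCast_cpow_of_pos (Nat.succ_pos n), mul_one_div]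
  gcongr
  exact hb n

lemma bdd_summable (s : ℂ) (hs : 1 < s.re) (b : ℕ → ℂ) (C : ℝ) (hb : ∀ n, ‖b n‖ ≤ C) :
    Summable (fun n : ℕ => b n / ((n + 1 : ℕ) : ℂ) ^ s) :=
  Summable.of_norm_bounded ((shift_summable s hs).mul_left C) (bdd_term s b C hb)

lemma bdd_tsum (s : ℂ) (hs : 1 < s.re) (b : ℕ → ℂ) (C : ℝ) (hb : ∀ n, ‖b n‖ ≤ C) :
    ‖∑' n : ℕ, b n / ((n + 1 : ℕ) : ℂ) ^ s‖ ≤ C * ∑' n : ℕ, (1 / ((n + 1 : ℕ) : ℝ) ^ s.re) := by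
  rw [← tsum_mul_left]
  exact tsum_of_norm_bounded ((shift_summable s hs).mul_left C).hasSum (bdd_term s b C hb)

lemma D_add (r : ℕ) (hr : 1 ≤ r) (s : ℂ) (hs : 1 < s.re) :
    HasSum (fun n : ℕ => (∑' m : ℕ, ramanujanSum (m + 1) (n + 2) / ((m + 1 : ℕ) : ℂ) ^ (r + 1)) /
      ((n + 1 : ℕ) : ℂ) ^ s) (D1 r s + D2 r s) := by
  have hds := double_summable r hr s hs
  have hS := hds.prod_symm.prod
  simp only [Prod.fst_swap, Prod.snd_swap, tsum_div_const] at hS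
  have hval : D1 r s + D2 r s =
      ∑' n : ℕ, (∑' m : ℕ, ramanujanSum (m + 1) (n + 2) / ((m + 1 : ℕ) : ℂ) ^ (r + 1)) /
      ((n + 1 : ℕ) : ℂ) ^ s := by
    simp only [← tsum_div_const]
    have hcomm := Summable.tsum_comm (f := fun m n : ℕ => ramanujanSum (m + 1) (n + 2) /
      ((m + 1 : ℕ) : ℂ) ^ (r + 1) / ((n + 1 : ℕ) : ℂ) ^ s) hds
    refine Eq.trans ?_ hcomm.symm
    have hmS := hds.prod
    simp only at hmS
    have h1 : Summable (fun m : ℕ =>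
        ((moebius (m + 1) : ℤ) / ((Nat.totient (m + 1) : ℂ) * ((m + 1 : ℕ) : ℂ) ^ (r + 1))) *
        ∑' n : ℕ, ramanujanSum (m + 1) (n + 1) / ((n + 1 : ℕ) : ℂ) ^ s) := by
      have hz : Summable (fun m : ℕ => 1 / ((m + 1 : ℕ) : ℝ) ^ (r + 1) *
          ∑' n : ℕ, (1 / ((n + 1 : ℕ) : ℝ) ^ s.re)) :=
        ((summable_nat_add_iff (f := fun n : ℕ => 1 / (n : ℝ) ^ (r + 1)) 1).mpr
          (Real.summable_one_div_nat_pow.mpr (by omega))).mul_right _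
      refine Summable.of_norm_bounded hz fun m => ?_
      have hb := bdd_tsum s hs (fun n => ramanujanSum (m + 1) (n + 1)) (Nat.totient (m + 1))
        (fun n => ram_norm_le_totient _ _)
      have hφ : (0 : ℝ) < Nat.totient (m + 1) := by
        exact_mod_cast Nat.totient_pos.mpr (Nat.succ_pos m)
      have h3 : |((moebius (m + 1) : ℤ) : ℝ)| ≤ 1 := by exact_mod_cast abs_moebius_le_one
      have hm : (0 : ℝ) < ((m + 1 : ℕ) : ℝ) := by exact_mod_cast Nat.succ_pos m
      rw [norm_mul, norm_div, norm_mul, norm_pow, Complex.norm_natCast, Complex.norm_natCast,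
        Complex.norm_intCast]
      calc _ ≤ 1 / ((Nat.totient (m + 1) : ℝ) * ((m + 1 : ℕ) : ℝ) ^ (r + 1)) *
            ((Nat.totient (m + 1) : ℝ) * ∑' n : ℕ, (1 / ((n + 1 : ℕ) : ℝ) ^ s.re)) := by
            gcongr
        _ = _ := by field_simp
    have key : ∀ m : ℕ,
        ((moebius (m + 1) : ℤ) / ((Nat.totient (m + 1) : ℂ) * ((m + 1 : ℕ) : ℂ) ^ (r + 1))) *
        (∑' n : ℕ, ramanujanSum (m + 1) (n + 1) / ((n + 1 : ℕ) : ℂ) ^ s) +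
        (1 / ((Nat.totient (m + 1) : ℂ) * ((m + 1 : ℕ) : ℂ) ^ (r + 1))) *
          ∑ χ ∈ Finset.univ.filter (fun χ : DirichletCharacter ℂ (m + 1) => χ ≠ 1),
            gaussSum' χ * ∑' n : ℕ, cCharF (m + 1) (fun b => starRingEnd ℂ (χ b)) (n + 1) /
              ((n + 1 : ℕ) : ℂ) ^ s =
        ∑' n : ℕ, ramanujanSum (m + 1) (n + 2) / ((m + 1 : ℕ) : ℂ) ^ (r + 1) /
          ((n + 1 : ℕ) : ℂ) ^ s := by
      intro m
      have a1 := (bdd_summable s hs (fun n => ramanujanSum (m + 1) (n + 1)) _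
        (fun n => ram_norm_le_totient _ _)).hasSum
      have a2 : ∀ χ : DirichletCharacter ℂ (m + 1), _ := fun χ =>
        (bdd_summable s hs (fun n => cCharF (m + 1) (fun b => starRingEnd ℂ (χ b)) (n + 1)) _
        (fun n => cChar_norm_le _ _ χ)).hasSum
      have a3 := hasSum_sum (s := Finset.univ.filter
        (fun χ : DirichletCharacter ℂ (m + 1) => χ ≠ 1))
        (fun χ _ => (a2 χ).mul_left (gaussSum' χ))
      have a4 := (a1.mul_left ((moebius (m + 1) : ℤ) /
        ((Nat.totient (m + 1) : ℂ) * ((m + 1 : ℕ) : ℂ) ^ (r + 1)))).add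
        (a3.mul_left (1 / ((Nat.totient (m + 1) : ℂ) * ((m + 1 : ℕ) : ℂ) ^ (r + 1))))
      rw [← a4.tsum_eq]
      refine tsum_congr fun n => ?_
      have hce : ramanujanSum (m + 1) (n + 2) = 1 / (Nat.totient (m + 1) : ℂ) *
          (((moebius (m + 1) : ℤ) : ℂ) * ramanujanSum (m + 1) (n + 1) +
          ∑ χ ∈ Finset.univ.filter (fun χ : DirichletCharacter ℂ (m + 1) => χ ≠ 1),
            gaussSum' χ * cCharF (m + 1) (fun b => starRingEnd ℂ (χ b)) (n + 1)) := by
        convert char_expand' (m + 1) (n + 1) (Nat.succ_pos m)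
      rw [hce]
      simp only [mul_div_assoc']
      rw [← Finset.sum_div]
      simp only [div_eq_mul_inv, mul_inv]
      ring
    have h2 := hmS.sub h1
    simp only [← key, add_sub_cancel_left] at h2
    rw [D1, D2, ← h1.tsum_add h2]
    exact tsum_congr key
  rw [hval]
  exact hS.hasSum

theorem stmt8 (r : ℕ) (hr : 1 ≤ r) (s : ℂ) (hs : (r : ℝ) + 1 < s.re) :
    Summable (fun n : ℕ => (sigma r (n + 2) : ℂ) / ((n + 1 : ℕ) : ℂ) ^ s) ∧
    (∑' n : ℕ, (sigma r (n + 2) : ℂ) / ((n + 1 : ℕ) : ℂ) ^ s) =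
      riemannZeta ((r : ℂ) + 1) *
        ∑ i ∈ Finset.range (r + 1), (r.choose i : ℂ) * (D1 r (s - i) + D2 r (s - i)) := by
  have h1 := (hasSum_sum (s := Finset.range (r + 1)) (fun i hi =>
    (D_add r hr (s - i) (by
      have : (i : ℝ) ≤ r := by exact_mod_cast Nat.lt_succ_iff.mp (Finset.mem_range.mp hi)
      simp
      linarith)).mul_left (r.choose i : ℂ))).mul_left (riemannZeta ((r : ℂ) + 1))
  have h2 : (fun n : ℕ => riemannZeta ((r : ℂ) + 1) * ∑ i ∈ Finset.range (r + 1),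
      (r.choose i : ℂ) *
      ((∑' m : ℕ, ramanujanSum (m + 1) (n + 2) / ((m + 1 : ℕ) : ℂ) ^ (r + 1)) /
      ((n + 1 : ℕ) : ℂ) ^ (s - i))) =
      (fun n : ℕ => (sigma r (n + 2) : ℂ) / ((n + 1 : ℕ) : ℂ) ^ s) := by
    funext n
    have hn : ((n + 1 : ℕ) : ℂ) ≠ 0 := by exact_mod_cast Nat.succ_ne_zero n
    rw [← ram_series r (n + 2) hr (by omega)]
    have : ((n + 2 : ℕ) : ℂ) = ((n + 1 : ℕ) : ℂ) + 1 := by push_cast; ring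
    rw [this, add_pow, Finset.mul_sum, Finset.mul_sum, Finset.sum_div]
    refine Finset.sum_congr rfl fun i _ => ?_
    rw [Complex.cpow_sub _ _ hn, Complex.cpow_natCast]
    have := (Complex.cpow_ne_zero_iff (x := ((n + 1 : ℕ) : ℂ)) (y := s)).mpr (Or.inl hn)
    have := pow_ne_zero i hn
    simp only [one_pow, mul_one]
    field_simp
  rw [h2] at h1
  exact ⟨h1.summable, h1.tsum_eq⟩
end
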